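/- Let Σ be a symmetric positive definite p×p real matrix, R a symmetric positive definite n×n real matrix, and F a real n×p matrix. Let S = F Σ Fᵀ + R, K = Σ Fᵀ S⁻¹, and let Σ′ = (I − K F) Σ be the Kalman posterior covariance. Then log det((Σ′)⁻¹) − log det(Σ⁻¹) = log det(F Σ Fᵀ + R) − log det R. That is, the Extended Kalman Filter information gain exactly equals the per-step mutual information cost term; minimizing the mutual information cost maximizes the EKF information gain. -/

import Mathlib

open Matrix

/-- The EKF information gain equals the per-step mutual information cost term: with
`S = F Σ Fᵀ + R`, `K = Σ Fᵀ S⁻¹`, and posterior covariance `Σ′ = (I − K F) Σ`,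
`log det((Σ′)⁻¹) − log det(Σ⁻¹) = log det(F Σ Fᵀ + R) − log det R`. -/
theorem stmt_13 {n p : ℕ} (Sig : Matrix (Fin p) (Fin p) ℝ)
    (R : Matrix (Fin n) (Fin n) ℝ) (F : Matrix (Fin n) (Fin p) ℝ)
    (hSig : Sig.PosDef) (hR : R.PosDef) :
    Real.log (((1 - (Sig * Fᵀ * (F * Sig * Fᵀ + R)⁻¹) * F) * Sig)⁻¹).det -
        Real.log (Sig⁻¹).det =
      Real.log (F * Sig * Fᵀ + R).det - Real.log R.det := by
  have hS : (F * Sig * Fᵀ + R).PosDef := by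
    have h := hSig.posSemidef.mul_mul_conjTranspose_same F
    rw [conjTranspose_eq_transpose_of_trivial] at h
    exact Matrix.PosDef.posSemidef_add h hR
  have hSd := hS.det_pos
  have hRd := hR.det_pos
  have hGd := hSig.det_pos
  have key : (1 - (Sig * Fᵀ * (F * Sig * Fᵀ + R)⁻¹) * F).det * (F * Sig * Fᵀ + R).det
      = R.det := by
    rw [Matrix.det_one_sub_mul_comm, ← Matrix.det_mul]
    congr 1
    have hu : IsUnit (F * Sig * Fᵀ + R).det := hSd.ne'.isUnit
    rw [Matrix.sub_mul, Matrix.one_mul, Matrix.mul_assoc F (Sig * Fᵀ * _), Matrix.mul_assoc (Sig * Fᵀ),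
      Matrix.nonsing_inv_mul _ hu, Matrix.mul_one, ← Matrix.mul_assoc]
    exact add_sub_cancel_left _ _
  have hne : (1 - (Sig * Fᵀ * (F * Sig * Fᵀ + R)⁻¹) * F).det ≠ 0 := by
    intro h
    rw [h, zero_mul] at key
    exact hRd.ne key
  rw [← key, Real.log_mul hne hSd.ne', Matrix.det_nonsing_inv, Matrix.det_nonsing_inv,
    Ring.inverse_eq_inv', Real.log_inv, Real.log_inv, Matrix.det_mul,
    Real.log_mul hne hGd.ne']
  ring
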